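/- Let (X₁, X₂) be bivariate normal with benchmark Y := α₁X₁ + α₂X₂ non-degenerate, and set r_A := Cov[X₁, X₂ | Y ∈ A]. Then the 20/60/20-rule-induced equilibrium equality r_{A₁} − 2·r_{A₂} + r_{A₃} = 0 holds, where A₁ := A(0, q̃), A₂ := A(q̃, 1−q̃), and A₃ := A(1−q̃, 1). -/

import Mathlib

open MeasureTheory ProbabilityTheory Filter Set

noncomputable section

/-- Covariance of two real random variables under the measure `m`. -/
def covar {Ω : Type*} [MeasurableSpace Ω] (m : Measure Ω) (f g : Ω → ℝ) : ℝ :=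
  ∫ ω, (f ω - ∫ x, f x ∂m) * (g ω - ∫ x, g x ∂m) ∂m

/-- Generalized inverse of the CDF of a measure on `ℝ`, `F⁻¹(p) = inf {y | F(y) ≥ p}`,
with values in `EReal` (`⊥` at `p = 0` and `⊤` at `p = 1` for fully supported laws). -/
def invCDF (μ : Measure ℝ) (p : ℝ) : EReal :=
  sInf ((fun x : ℝ => (x : EReal)) '' {x : ℝ | p ≤ cdf μ x})

/-- Quantile conditioning set `A(a,b) = {y : F⁻¹(a) < y < F⁻¹(b)}`. -/
def qSet (μ : Measure ℝ) (a b : ℝ) : Set ℝ :=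
  {y : ℝ | invCDF μ a < (y : EReal) ∧ (y : EReal) < invCDF μ b}

/-- The standard normal quantile function `Φ⁻¹(p) = inf {x | Φ(x) ≥ p}`. -/
def stdNormalQuantile (p : ℝ) : ℝ := sInf {x : ℝ | p ≤ cdf (gaussianReal 0 1) x}

/-!
The vector of residuals `Wᵢ = Xᵢ - βᵢ Y` of the linear regressions on `Y` is uncorrelated with `Y`,
hence, by joint normality, independent of it. Conditioning on `Y ∈ A` therefore leaves the law of
`(W₁, W₂)` unchanged, and `Cov[X₁, X₂ | Y ∈ A] = Cov[X₁, X₂] + β₁ β₂ (Var[Y | Y ∈ A] - Var[Y])`.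
The weights `1, -2, 1` cancel everything but `Var[Y | A₁] - 2 Var[Y | A₂] + Var[Y | A₃]`. As `F_Y`
is continuous and strictly increasing, `A(a, b)` is the preimage of the interval `(a, b)` under
`F_Y`; standardizing `Y` then reduces the claim to a standard normal `V`. There `A₁` and `A₃`
have the same conditional variance by symmetry, and `q̃` is chosen to make it equal to that of `A₂`.
-/

section Conditioning

variable {Ω E F : Type*} [MeasurableSpace Ω] [MeasurableSpace E] [MeasurableSpace F]
  {P : Measure Ω} {A : Set E}

lemma map_cond_preimage {f : Ω → E} (hf : AEMeasurable f P) (hA : MeasurableSet A) :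
    (P[|f ⁻¹' A]).map f = (P.map f)[|A] := by
  rw [ProbabilityTheory.cond, ProbabilityTheory.cond, Measure.map_smul,
    Measure.restrict_map_of_aemeasurable hf hA, Measure.map_apply_of_aemeasurable hf hA]

lemma variance_cond_preimage {Y : Ω → ℝ} (hY : AEMeasurable Y P) {A : Set ℝ}
    (hA : MeasurableSet A) : Var[Y; P[|Y ⁻¹' A]] = Var[id; (P.map Y)[|A]] := by
  rw [← map_cond_preimage hY hA, variance_id_map (hY.mono_ac cond_absolutelyContinuous)]

lemma prod_cond_univ (μ : Measure E) (ν : Measure F) [SFinite μ] [IsProbabilityMeasure ν]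
    (A : Set E) : (μ.prod ν)[|A ×ˢ univ] = (μ[|A]).prod ν := by
  rw [ProbabilityTheory.cond, ProbabilityTheory.cond, Measure.prod_prod, measure_univ, mul_one,
    ← Measure.prod_restrict, Measure.restrict_univ, Measure.prod_smul_left]

lemma memLp_cond {G : Type*} [NormedAddCommGroup G] {X : Ω → G} {p : ENNReal} (hX : MemLp X p P)
    {s : Set Ω} (hs : P s ≠ 0) : MemLp X p (P[|s]) :=
  (hX.restrict s).smul_measure (ENNReal.inv_ne_top.2 hs)

variable [IsProbabilityMeasure P] {Y : Ω → E} {W : Ω → F}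

lemma map_prodMk_cond_preimage (h : IndepFun Y W P) (hY : AEMeasurable Y P)
    (hW : AEMeasurable W P) (hA : MeasurableSet A) :
    (P[|Y ⁻¹' A]).map (fun ω ↦ (Y ω, W ω)) = ((P.map Y)[|A]).prod (P.map W) := by
  have := Measure.isProbabilityMeasure_map hW
  have hpre : Y ⁻¹' A = (fun ω ↦ (Y ω, W ω)) ⁻¹' A ×ˢ univ := by
    rw [mk_preimage_prod, preimage_univ, inter_univ]
  rw [hpre, map_cond_preimage (hY.prodMk hW) (hA.prod .univ),
    (indepFun_iff_map_prod_eq_prod_map_map hY hW).1 h, prod_cond_univ]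

lemma map_cond_preimage_of_indepFun (h : IndepFun Y W P) (hY : AEMeasurable Y P)
    (hW : AEMeasurable W P) (hA : MeasurableSet A) (hPA : P (Y ⁻¹' A) ≠ 0) :
    (P[|Y ⁻¹' A]).map W = P.map W := by
  have : IsProbabilityMeasure ((P.map Y)[|A]) :=
    cond_isProbabilityMeasure (by rwa [Measure.map_apply_of_aemeasurable hY hA])
  rw [← Measure.snd_map_prodMk₀ (hY.mono_ac cond_absolutelyContinuous),
    map_prodMk_cond_preimage h hY hW hA, Measure.snd_prod]

lemma indepFun_cond_preimage (h : IndepFun Y W P) (hY : AEMeasurable Y P)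
    (hW : AEMeasurable W P) (hA : MeasurableSet A) (hPA : P (Y ⁻¹' A) ≠ 0) :
    IndepFun Y W P[|Y ⁻¹' A] := by
  have := cond_isProbabilityMeasure hPA
  rw [indepFun_iff_map_prod_eq_prod_map_map (hY.mono_ac cond_absolutelyContinuous)
      (hW.mono_ac cond_absolutelyContinuous),
    map_prodMk_cond_preimage h hY hW hA, map_cond_preimage hY hA,
    map_cond_preimage_of_indepFun h hY hW hA hPA]

end Conditioning

section Regression

variable {Ω : Type*} [MeasurableSpace Ω] {P : Measure Ω} {X₁ X₂ Y : Ω → ℝ}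

lemma covar_eq_covariance (P : Measure Ω) (X₁ X₂ : Ω → ℝ) : covar P X₁ X₂ = cov[X₁, X₂; P] := rfl

lemma covariance_eq_of_indepFun_residual [IsProbabilityMeasure P] {β₁ β₂ : ℝ}
    (hX₁ : MemLp X₁ 2 P) (hX₂ : MemLp X₂ 2 P) (hY : MemLp Y 2 P)
    (h : IndepFun Y (fun ω ↦ (X₁ ω - β₁ * Y ω, X₂ ω - β₂ * Y ω)) P) :
    cov[X₁, X₂; P] = β₁ * β₂ * Var[Y; P]
      + cov[fun ω ↦ X₁ ω - β₁ * Y ω, fun ω ↦ X₂ ω - β₂ * Y ω; P] := by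
  have hW₁ := hX₁.sub (hY.const_mul β₁)
  have hW₂ := hX₂.sub (hY.const_mul β₂)
  have h₁ : cov[X₁, Y; P] = β₁ * Var[Y; P] := by
    have h₀ := (h.comp measurable_id measurable_fst).symm.covariance_eq_zero hW₁ hY
    have h' := covariance_fun_sub_left hX₁ (hY.const_mul β₁) hY
    rw [covariance_const_mul_left, covariance_self hY.aemeasurable] at h'
    exact sub_eq_zero.1 (h'.symm.trans h₀)
  have h₂ : cov[Y, X₂; P] = β₂ * Var[Y; P] := by
    have h₀ := (h.comp measurable_id measurable_snd).covariance_eq_zero hY hW₂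
    have h' := covariance_fun_sub_right hY hX₂ (hY.const_mul β₂)
    rw [covariance_const_mul_right, covariance_self hY.aemeasurable] at h'
    exact sub_eq_zero.1 (h'.symm.trans h₀)
  rw [covariance_fun_sub_fun_sub hX₁ (hY.const_mul β₁) hX₂ (hY.const_mul β₂)]
  simp only [covariance_const_mul_left, covariance_const_mul_right, h₁, h₂,
    covariance_self hY.aemeasurable]
  ring

lemma covariance_cond_preimage_of_indepFun_residual [IsProbabilityMeasure P] {β₁ β₂ : ℝ}
    (hX₁ : MemLp X₁ 2 P) (hX₂ : MemLp X₂ 2 P) (hY : MemLp Y 2 P)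
    (h : IndepFun Y (fun ω ↦ (X₁ ω - β₁ * Y ω, X₂ ω - β₂ * Y ω)) P)
    {A : Set ℝ} (hA : MeasurableSet A) (hPA : P (Y ⁻¹' A) ≠ 0) :
    cov[X₁, X₂; P[|Y ⁻¹' A]]
      = cov[X₁, X₂; P] + β₁ * β₂ * (Var[Y; P[|Y ⁻¹' A]] - Var[Y; P]) := by
  have := cond_isProbabilityMeasure hPA
  set W : Ω → ℝ × ℝ := fun ω ↦ (X₁ ω - β₁ * Y ω, X₂ ω - β₂ * Y ω)
  have hW : AEMeasurable W P := (hX₁.sub (hY.const_mul β₁)).aemeasurable.prodMk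
    (hX₂.sub (hY.const_mul β₂)).aemeasurable
  have hcovW : cov[fun ω ↦ (W ω).1, fun ω ↦ (W ω).2; P[|Y ⁻¹' A]]
      = cov[fun ω ↦ (W ω).1, fun ω ↦ (W ω).2; P] := by
    rw [← covariance_map_fun (by fun_prop) (by fun_prop) hW,
      ← covariance_map_fun (by fun_prop) (by fun_prop) (hW.mono_ac cond_absolutelyContinuous),
      map_cond_preimage_of_indepFun h hY.aemeasurable hW hA hPA]
  rw [covariance_eq_of_indepFun_residual hX₁ hX₂ hY h,
    covariance_eq_of_indepFun_residual (memLp_cond hX₁ hPA) (memLp_cond hX₂ hPA)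
      (memLp_cond hY hPA) (indepFun_cond_preimage h hY.aemeasurable hW hA hPA), hcovW]
  ring

/-- The slope of the linear regression of `X` on `Y`, with junk value `0` when `Y` is degenerate. -/
def regressionSlope (X Y : Ω → ℝ) (P : Measure Ω) : ℝ := cov[X, Y; P] / Var[Y; P]

lemma covariance_sub_regressionSlope_mul [IsFiniteMeasure P] {X : Ω → ℝ} (hX : MemLp X 2 P)
    (hY : MemLp Y 2 P) (hVar : Var[Y; P] ≠ 0) :
    cov[fun ω ↦ X ω - regressionSlope X Y P * Y ω, Y; P] = 0 := by
  rw [covariance_fun_sub_left hX (hY.const_mul _) hY, covariance_const_mul_left,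
    covariance_self hY.aemeasurable, regressionSlope, div_mul_cancel₀ _ hVar, sub_self]

end Regression

section JointlyGaussian

lemma strongDual_comp_prodMk {Ω : Type*} (L : StrongDual ℝ (ℝ × ℝ)) (X₁ X₂ : Ω → ℝ) :
    L ∘ (fun ω ↦ (X₁ ω, X₂ ω)) = fun ω ↦ L (1, 0) * X₁ ω + L (0, 1) * X₂ ω := by
  ext ω
  have hbasis : (X₁ ω, X₂ ω) = X₁ ω • ((1, 0) : ℝ × ℝ) + X₂ ω • (0, 1) := by simp
  rw [Function.comp_apply, hbasis, map_add, map_smul, map_smul, smul_eq_mul, smul_eq_mul,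
    mul_comm (X₁ ω), mul_comm (X₂ ω)]

variable {Ω : Type*} [MeasurableSpace Ω] {P : Measure Ω} {X₁ X₂ Y : Ω → ℝ}

lemma hasGaussianLaw_prodMk_of_forall_linear_combination
    (h : ∀ c₁ c₂ : ℝ, HasGaussianLaw (fun ω ↦ c₁ * X₁ ω + c₂ * X₂ ω) P) :
    HasGaussianLaw (fun ω ↦ (X₁ ω, X₂ ω)) P := by
  have hX₁ : AEMeasurable X₁ P := by simpa using (h 1 0).aemeasurable
  have hX₂ : AEMeasurable X₂ P := by simpa using (h 0 1).aemeasurable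
  refine ⟨isGaussian_of_isGaussian_map fun L ↦ ?_⟩
  rw [AEMeasurable.map_map_of_aemeasurable (by fun_prop) (hX₁.prodMk hX₂),
    strongDual_comp_prodMk]
  exact (h _ _).isGaussian_map

lemma hasGaussianLaw_prodMk_linear_combination (h : HasGaussianLaw (fun ω ↦ (X₁ ω, X₂ ω)) P)
    (α₁ α₂ : ℝ) :
    HasGaussianLaw (fun ω ↦ ((X₁ ω, X₂ ω), α₁ * X₁ ω + α₂ * X₂ ω)) P :=
  h.map_fun ((ContinuousLinearMap.id ℝ (ℝ × ℝ)).prod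
    (α₁ • ContinuousLinearMap.fst ℝ ℝ ℝ + α₂ • ContinuousLinearMap.snd ℝ ℝ ℝ))

lemma indepFun_prodMk_of_covariance_eq_zero {W₁ W₂ : Ω → ℝ}
    (h : HasGaussianLaw (fun ω ↦ (Y ω, W₁ ω, W₂ ω)) P) (h₁ : cov[W₁, Y; P] = 0)
    (h₂ : cov[W₂, Y; P] = 0) :
    IndepFun Y (fun ω ↦ (W₁ ω, W₂ ω)) P := by
  have := h.isProbabilityMeasure
  refine h.indepFun_of_covariance_strongDual fun L₁ L₂ ↦ ?_
  have hL₁ : L₁ ∘ Y = fun ω ↦ L₁ 1 * Y ω := by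
    ext ω
    rw [Function.comp_apply, mul_comm, ← smul_eq_mul, ← map_smul, smul_eq_mul, mul_one]
  have hW₁ := h.snd.fst.memLp_two.const_mul (L₂ (1, 0))
  have hW₂ := h.snd.snd.memLp_two.const_mul (L₂ (0, 1))
  have hcov : cov[fun ω ↦ L₂ (1, 0) * W₁ ω + L₂ (0, 1) * W₂ ω, Y; P] = 0 := by
    refine (covariance_add_left hW₁ hW₂ h.fst.memLp_two).trans ?_
    rw [covariance_const_mul_left, covariance_const_mul_left, h₁, h₂, mul_zero, mul_zero, add_zero]
  rw [hL₁, strongDual_comp_prodMk, covariance_const_mul_left, covariance_comm, hcov, mul_zero]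

lemma indepFun_residual (h : HasGaussianLaw (fun ω ↦ ((X₁ ω, X₂ ω), Y ω)) P)
    (hVar : Var[Y; P] ≠ 0) :
    IndepFun Y (fun ω ↦ (X₁ ω - regressionSlope X₁ Y P * Y ω,
      X₂ ω - regressionSlope X₂ Y P * Y ω)) P := by
  have := h.isProbabilityMeasure
  let y := ContinuousLinearMap.snd ℝ (ℝ × ℝ) ℝ
  let x₁ := ContinuousLinearMap.fst ℝ ℝ ℝ ∘L ContinuousLinearMap.fst ℝ (ℝ × ℝ) ℝ
  let x₂ := ContinuousLinearMap.snd ℝ ℝ ℝ ∘L ContinuousLinearMap.fst ℝ (ℝ × ℝ) ℝ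
  have hlaw := h.map_fun
    (y.prod ((x₁ - regressionSlope X₁ Y P • y).prod (x₂ - regressionSlope X₂ Y P • y)))
  exact indepFun_prodMk_of_covariance_eq_zero hlaw
    (covariance_sub_regressionSlope_mul h.fst.fst.memLp_two h.snd.memLp_two hVar)
    (covariance_sub_regressionSlope_mul h.fst.snd.memLp_two h.snd.memLp_two hVar)

lemma covariance_cond_preimage_of_hasGaussianLaw
    (h : HasGaussianLaw (fun ω ↦ ((X₁ ω, X₂ ω), Y ω)) P) (hVar : Var[Y; P] ≠ 0)
    {A : Set ℝ} (hA : MeasurableSet A) (hPA : P (Y ⁻¹' A) ≠ 0) :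
    cov[X₁, X₂; P[|Y ⁻¹' A]] = cov[X₁, X₂; P]
      + regressionSlope X₁ Y P * regressionSlope X₂ Y P
        * (Var[Y; P[|Y ⁻¹' A]] - Var[Y; P]) :=
  have := h.isProbabilityMeasure
  covariance_cond_preimage_of_indepFun_residual h.fst.fst.memLp_two h.fst.snd.memLp_two
    h.snd.memLp_two (indepFun_residual h hVar) hA hPA

end JointlyGaussian

section QuantileSets

open scoped Topology

variable (μ : Measure ℝ)

lemma invCDF_le_coe_iff {p y : ℝ} : invCDF μ p ≤ y ↔ p ≤ cdf μ y := by
  refine ⟨fun h ↦ ?_, fun h ↦ sInf_le ⟨y, h, rfl⟩⟩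
  have hright : Tendsto (cdf μ) (𝓝[>] y) (𝓝 (cdf μ y)) :=
    ((cdf μ).right_continuous y).mono Ioi_subset_Ici_self
  refine ge_of_tendsto hright (eventually_mem_nhdsWithin.mono fun z hz ↦ ?_)
  obtain ⟨_, ⟨x, hpx, rfl⟩, hxz⟩ := sInf_lt_iff.1 (h.trans_lt (EReal.coe_lt_coe_iff.2 hz))
  exact le_trans hpx (monotone_cdf μ (EReal.coe_lt_coe_iff.1 hxz).le)

variable [IsProbabilityMeasure μ]

lemma strictMono_cdf [μ.IsOpenPosMeasure] : StrictMono (cdf μ) := by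
  intro a b hab
  have hpos : 0 < μ (Ioc a b) :=
    (isOpen_Ioo.measure_pos μ (nonempty_Ioo.2 hab)).trans_le (measure_mono Ioo_subset_Ioc_self)
  rwa [← measure_cdf μ, StieltjesFunction.measure_Ioc, ENNReal.ofReal_pos, sub_pos] at hpos

lemma continuous_cdf [NullSingletonClass μ] : Continuous (cdf μ) := by
  refine continuous_iff_continuousAt.2 fun a ↦ ?_
  rw [(monotone_cdf μ).continuousAt_iff_leftLim_eq_rightLim, StieltjesFunction.rightLim_eq]
  have hjump : μ {a} = 0 := measure_singleton a
  rw [← measure_cdf μ, StieltjesFunction.measure_singleton, ENNReal.ofReal_eq_zero,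
    sub_nonpos] at hjump
  exact ((monotone_cdf μ).leftLim_le le_rfl).antisymm hjump

lemma exists_cdf_eq [NullSingletonClass μ] {p : ℝ} (hp : p ∈ Ioo 0 1) : ∃ x, cdf μ x = p :=
  mem_range_of_exists_le_of_exists_ge (continuous_cdf μ)
    ((tendsto_cdf_atBot μ).eventually_le_const hp.1).exists
    ((tendsto_cdf_atTop μ).eventually_const_le hp.2).exists

lemma cdf_neg [NullSingletonClass μ] [μ.IsNegInvariant] (x : ℝ) :
    cdf μ (-x) = 1 - cdf μ x := by
  have hreflect : μ.real (Iic (-x)) = μ.real (Ici x) := by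
    rw [← Measure.map_neg_eq_self μ, map_measureReal_apply measurable_neg measurableSet_Iic,
      Measure.map_neg_eq_self, neg_preimage, neg_Iic, neg_neg]
  rw [cdf_eq_real, cdf_eq_real, hreflect, measureReal_congr Ioi_ae_eq_Ici.symm, ← compl_Iic,
    probReal_compl_eq_one_sub measurableSet_Iic]

variable [NullSingletonClass μ] [μ.IsOpenPosMeasure]

lemma invCDF_lt_coe_iff {p y : ℝ} : invCDF μ p < y ↔ p < cdf μ y := by
  constructor
  · intro h
    obtain ⟨_, ⟨x, hpx, rfl⟩, hxy⟩ := sInf_lt_iff.1 h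
    exact lt_of_le_of_lt hpx (strictMono_cdf μ (EReal.coe_lt_coe_iff.1 hxy))
  · intro h
    have hleft : ∀ᶠ x in 𝓝[<] y, p < cdf μ x :=
      ((continuous_cdf μ).tendsto y).mono_left nhdsWithin_le_nhds |>.eventually_const_lt h
    obtain ⟨x, hpx, hxy⟩ := (hleft.and eventually_mem_nhdsWithin).exists
    exact sInf_lt_iff.2 ⟨x, ⟨x, hpx.le, rfl⟩, EReal.coe_lt_coe_iff.2 hxy⟩

lemma qSet_eq_preimage_cdf (a b : ℝ) : qSet μ a b = cdf μ ⁻¹' Ioo a b := by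
  ext y
  exact and_congr (invCDF_lt_coe_iff μ) (lt_iff_lt_of_le_iff_le (invCDF_le_coe_iff μ))

lemma isOpen_qSet (a b : ℝ) : IsOpen (qSet μ a b) :=
  qSet_eq_preimage_cdf μ a b ▸ isOpen_Ioo.preimage (continuous_cdf μ)

lemma measure_qSet_ne_zero {a b : ℝ} (ha : 0 ≤ a) (hab : a < b) (hb : b ≤ 1) :
    μ (qSet μ a b) ≠ 0 := by
  obtain ⟨p, hap, hpb⟩ := exists_between hab
  obtain ⟨x, rfl⟩ := exists_cdf_eq μ ⟨ha.trans_lt hap, hpb.trans_le hb⟩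
  exact (isOpen_qSet μ a b).measure_ne_zero μ ⟨x, by rw [qSet_eq_preimage_cdf]; exact ⟨hap, hpb⟩⟩

lemma neg_preimage_qSet [μ.IsNegInvariant] (a b : ℝ) :
    Neg.neg ⁻¹' qSet μ (1 - b) (1 - a) = qSet μ a b := by
  ext x
  simp only [qSet_eq_preimage_cdf, mem_preimage, mem_Ioo, cdf_neg, sub_lt_sub_iff_left]
  exact and_comm

lemma variance_cond_qSet_one_sub [μ.IsNegInvariant] (a b : ℝ) :
    Var[id; μ[|qSet μ (1 - b) (1 - a)]] = Var[id; μ[|qSet μ a b]] := by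
  have hvar := variance_cond_preimage (P := μ) measurable_neg.aemeasurable
    (isOpen_qSet μ (1 - b) (1 - a)).measurableSet
  rw [Measure.map_neg_eq_self, neg_preimage_qSet] at hvar
  exact hvar.symm.trans variance_fun_neg

end QuantileSets

section Gaussian

instance instIsOpenPosMeasureGaussianReal (m : ℝ) (v : NNReal) [NeZero v] :
    (gaussianReal m v).IsOpenPosMeasure :=
  (gaussianReal_absolutelyContinuous' m (NeZero.ne v)).isOpenPosMeasure

instance instNullSingletonClassGaussianReal (m : ℝ) (v : NNReal) [NeZero v] :
    NullSingletonClass (gaussianReal m v) :=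
  nullSingletonClass_gaussianReal (NeZero.ne v)

instance instIsNegInvariantGaussianReal (v : NNReal) : (gaussianReal 0 v).IsNegInvariant :=
  ⟨by simpa using! gaussianReal_map_neg (μ := 0) (v := v)⟩

lemma gaussianReal_eq_map_std (m : ℝ) (v : NNReal) :
    gaussianReal m v = (gaussianReal 0 1).map (fun x ↦ √v * x + m) := by
  have hcomp : (fun x : ℝ ↦ √v * x + m) = (· + m) ∘ (√v * ·) := rfl
  rw [hcomp, ← Measure.map_map (by fun_prop) (by fun_prop), gaussianReal_map_const_mul,
    gaussianReal_map_add_const]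
  congr 1
  · simp
  · ext
    simp

lemma cdf_gaussianReal_sqrt_mul_add (m : ℝ) (v : NNReal) [NeZero v] (x : ℝ) :
    cdf (gaussianReal m v) (√v * x + m) = cdf (gaussianReal 0 1) x := by
  have hv : 0 < √(v : ℝ) := Real.sqrt_pos.2 (NNReal.coe_pos.2 (NeZero.pos v))
  rw [cdf_eq_real, cdf_eq_real, gaussianReal_eq_map_std m v,
    map_measureReal_apply (by fun_prop) measurableSet_Iic]
  congr 1
  ext y
  simp [hv]

lemma preimage_qSet_gaussianReal (m : ℝ) (v : NNReal) [NeZero v] (a b : ℝ) :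
    (fun x ↦ √v * x + m) ⁻¹' qSet (gaussianReal m v) a b = qSet (gaussianReal 0 1) a b := by
  ext x
  simp only [qSet_eq_preimage_cdf, mem_preimage, cdf_gaussianReal_sqrt_mul_add]

/-- The variance of a standard normal variable `V` given that `V` lies strictly between its
quantiles of orders `a` and `b`. -/
def stdNormalQuantileVariance (a b : ℝ) : ℝ :=
  Var[id; (gaussianReal 0 1)[|qSet (gaussianReal 0 1) a b]]

lemma variance_cond_qSet_gaussianReal (m : ℝ) (v : NNReal) [NeZero v] {a b : ℝ} (ha : 0 ≤ a)
    (hab : a < b) (hb : b ≤ 1) :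
    Var[id; (gaussianReal m v)[|qSet (gaussianReal m v) a b]]
      = v * stdNormalQuantileVariance a b := by
  have hpre := preimage_qSet_gaussianReal m v a b
  have := cond_isProbabilityMeasure (measure_qSet_ne_zero (gaussianReal 0 1) ha hab hb)
  have hvar := variance_cond_preimage (P := gaussianReal 0 1) (Y := fun x ↦ √v * x + m)
    (by fun_prop) (isOpen_qSet (gaussianReal m v) a b).measurableSet
  rw [← gaussianReal_eq_map_std, hpre] at hvar
  rw [← hvar, variance_add_const (by fun_prop), variance_const_mul, Real.sq_sqrt v.coe_nonneg]
  rfl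

lemma stdNormalQuantile_cdf (x : ℝ) : stdNormalQuantile (cdf (gaussianReal 0 1) x) = x := by
  have hIci : {y | cdf (gaussianReal 0 1) x ≤ cdf (gaussianReal 0 1) y} = Ici x :=
    ext fun _ ↦ (strictMono_cdf _).le_iff_le
  rw [stdNormalQuantile, hIci, csInf_Ici]

lemma lt_stdNormalQuantile_iff {p x : ℝ} (hp : p ∈ Ioo 0 1) :
    x < stdNormalQuantile p ↔ cdf (gaussianReal 0 1) x < p := by
  obtain ⟨y, rfl⟩ := exists_cdf_eq (gaussianReal 0 1) hp
  rw [stdNormalQuantile_cdf, (strictMono_cdf _).lt_iff_lt]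

lemma stdNormalQuantile_lt_iff {p x : ℝ} (hp : p ∈ Ioo 0 1) :
    stdNormalQuantile p < x ↔ p < cdf (gaussianReal 0 1) x := by
  obtain ⟨y, rfl⟩ := exists_cdf_eq (gaussianReal 0 1) hp
  rw [stdNormalQuantile_cdf, (strictMono_cdf _).lt_iff_lt]

lemma Iio_stdNormalQuantile {p : ℝ} (hp : p ∈ Ioo 0 1) :
    Iio (stdNormalQuantile p) = qSet (gaussianReal 0 1) 0 p := by
  ext x
  have hcdf : 0 < cdf (gaussianReal 0 1) x :=
    (cdf_nonneg _ (x - 1)).trans_lt (strictMono_cdf _ (sub_one_lt x))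
  simp only [qSet_eq_preimage_cdf, mem_Iio, lt_stdNormalQuantile_iff hp, mem_preimage, mem_Ioo,
    hcdf, true_and]

lemma Ioo_stdNormalQuantile {p q : ℝ} (hp : p ∈ Ioo 0 1) (hq : q ∈ Ioo 0 1) :
    Ioo (stdNormalQuantile p) (stdNormalQuantile q) = qSet (gaussianReal 0 1) p q := by
  ext x
  simp only [qSet_eq_preimage_cdf, mem_preimage, mem_Ioo, lt_stdNormalQuantile_iff hq,
    stdNormalQuantile_lt_iff hp]

end Gaussian

section Equilibrium

variable {Ω : Type*} [MeasurableSpace Ω] {P : Measure Ω} {X₁ X₂ Y : Ω → ℝ}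

lemma covar_cond_preimage_qSet (h : HasGaussianLaw (fun ω ↦ ((X₁ ω, X₂ ω), Y ω)) P)
    (hVar : Var[Y; P] ≠ 0) {a b : ℝ} (ha : 0 ≤ a) (hab : a < b) (hb : b ≤ 1) :
    covar (P[|Y ⁻¹' qSet (P.map Y) a b]) X₁ X₂ = cov[X₁, X₂; P]
      + regressionSlope X₁ Y P * regressionSlope X₂ Y P
        * (Var[Y; P] * stdNormalQuantileVariance a b - Var[Y; P]) := by
  have hpos : 0 < Var[Y; P] := (variance_nonneg Y P).lt_of_ne' hVar
  have : NeZero Var[Y; P].toNNReal := ⟨(Real.toNNReal_pos.2 hpos).ne'⟩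
  have hYm := h.snd.aemeasurable
  have hlaw := h.snd.map_eq_gaussianReal
  have hA : MeasurableSet (qSet (P.map Y) a b) := hlaw ▸ (isOpen_qSet _ a b).measurableSet
  have hPA : P (Y ⁻¹' qSet (P.map Y) a b) ≠ 0 := by
    rw [← Measure.map_apply_of_aemeasurable hYm hA, hlaw]
    exact measure_qSet_ne_zero _ ha hab hb
  rw [covar_eq_covariance, covariance_cond_preimage_of_hasGaussianLaw h hVar hA hPA,
    variance_cond_preimage hYm hA, hlaw, variance_cond_qSet_gaussianReal _ _ ha hab hb,
    Real.coe_toNNReal _ hpos.le]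

theorem equilibrium_206020_general (h : HasGaussianLaw (fun ω ↦ ((X₁ ω, X₂ ω), Y ω)) P)
    (hVar : Var[Y; P] ≠ 0) {q : ℝ} (hq : q ∈ Ioo 0 (1 / 2))
    (hqdef : Var[id; (gaussianReal 0 1)[|Iio (stdNormalQuantile q)]]
      = Var[id; (gaussianReal 0 1)[|Ioo (stdNormalQuantile q) (stdNormalQuantile (1 - q))]]) :
    covar (P[|Y ⁻¹' qSet (P.map Y) 0 q]) X₁ X₂
      - 2 * covar (P[|Y ⁻¹' qSet (P.map Y) q (1 - q)]) X₁ X₂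
      + covar (P[|Y ⁻¹' qSet (P.map Y) (1 - q) 1]) X₁ X₂ = 0 := by
  obtain ⟨hq₀, hq₁⟩ := hq
  have htails : stdNormalQuantileVariance (1 - q) 1 = stdNormalQuantileVariance 0 q := by
    simpa only [stdNormalQuantileVariance, sub_zero] using
      variance_cond_qSet_one_sub (gaussianReal 0 1) 0 q
  have hmiddle : stdNormalQuantileVariance 0 q = stdNormalQuantileVariance q (1 - q) := by
    rwa [Iio_stdNormalQuantile ⟨hq₀, by linarith⟩,
      Ioo_stdNormalQuantile ⟨hq₀, by linarith⟩ ⟨by linarith, by linarith⟩] at hqdef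
  rw [covar_cond_preimage_qSet h hVar le_rfl hq₀ (by linarith),
    covar_cond_preimage_qSet h hVar hq₀.le (by linarith) (by linarith),
    covar_cond_preimage_qSet h hVar (by linarith) (by linarith) le_rfl, htails, hmiddle]
  ring

end Equilibrium

/-- For a bivariate normal vector `(X₁, X₂)` with non-degenerate benchmark
`Y = α₁X₁ + α₂X₂`, the 20/60/20-rule-induced equilibrium holds:
`r_{A₁} − 2 r_{A₂} + r_{A₃} = 0`, where `r_A = Cov[X₁, X₂ | Y ∈ A]` and
`A₁ = A(0, q̃)`, `A₂ = A(q̃, 1−q̃)`, `A₃ = A(1−q̃, 1)`. -/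
theorem equilibrium_206020
    {Ω : Type*} [MeasureSpace Ω] [IsProbabilityMeasure (ℙ : Measure Ω)]
    (X₁ X₂ : Ω → ℝ) (hX₁ : Measurable X₁) (hX₂ : Measurable X₂)
    (μ₁ μ₂ σ₁ σ₂ r ρ : ℝ) (hσ₁ : 0 < σ₁) (hσ₂ : 0 < σ₂)
    (hρ : ρ = r / (σ₁ * σ₂)) (hρmem : ρ ∈ Set.Ioo (-1 : ℝ) 1)
    (hGauss : ∀ c₁ c₂ : ℝ,
      (ℙ : Measure Ω).map (fun ω => c₁ * X₁ ω + c₂ * X₂ ω)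
        = gaussianReal (c₁ * μ₁ + c₂ * μ₂)
            (Real.toNNReal (c₁ ^ 2 * σ₁ ^ 2 + 2 * c₁ * c₂ * r + c₂ ^ 2 * σ₂ ^ 2)))
    (α₁ α₂ : ℝ) (hα : (α₁, α₂) ≠ (0, 0))
    (Y : Ω → ℝ) (hY : Y = fun ω => α₁ * X₁ ω + α₂ * X₂ ω)
    (hVarYpos : 0 < variance Y ℙ)
    (q : ℝ) (hq : q ∈ Set.Ioo (0 : ℝ) (1/2))
    (hqdef : variance (fun x => x) ((gaussianReal 0 1)[|Set.Iio (stdNormalQuantile q)])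
      = variance (fun x => x)
          ((gaussianReal 0 1)[|Set.Ioo (stdNormalQuantile q) (stdNormalQuantile (1 - q))]))
    (A₁ A₂ A₃ : Set ℝ)
    (hA₁ : A₁ = qSet ((ℙ : Measure Ω).map Y) 0 q)
    (hA₂ : A₂ = qSet ((ℙ : Measure Ω).map Y) q (1 - q))
    (hA₃ : A₃ = qSet ((ℙ : Measure Ω).map Y) (1 - q) 1) :
    covar (ℙ[|Y ⁻¹' A₁]) X₁ X₂ - 2 * covar (ℙ[|Y ⁻¹' A₂]) X₁ X₂
      + covar (ℙ[|Y ⁻¹' A₃]) X₁ X₂ = 0 := by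
  subst hY hA₁ hA₂ hA₃
  have hX : HasGaussianLaw (fun ω ↦ (X₁ ω, X₂ ω)) ℙ :=
    hasGaussianLaw_prodMk_of_forall_linear_combination fun c₁ c₂ ↦
      ⟨by rw [hGauss c₁ c₂]; infer_instance⟩
  exact equilibrium_206020_general (hasGaussianLaw_prodMk_linear_combination hX α₁ α₂)
    hVarYpos.ne' hq hqdef
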